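/- (Wegner-type single-site and two-site estimates.) Let μ be a probability measure on ℝ which is α-regular for some α > 0 (there is C₀ ≥ 0 with μ([t−ε,t+ε]) ≤ C₀ε^α for all t, ε > 0), and let 0 < s < α. Then there exists C_s < ∞, depending only on μ and s, such that for every countable set T, every bounded self-adjoint operator A₀ on ℓ²(T), every z ∈ ℂ ∖ ℝ, and all distinct x, y ∈ T: (1) ∫ |⟨δ_x, (A₀ + v P_x − z)^{−1} δ_x⟩|^s dμ(v) ≤ C_s, and (2) ∫∫ |⟨δ_x, (A₀ + u P_x + v P_y − z)^{−1} δ_y⟩|^s dμ(u) dμ(v) ≤ C_s, where P_x denotes the orthogonal projection onto the span of δ_x. -/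

import Mathlib

open MeasureTheory
open scoped ENNReal NNReal Classical

noncomputable section

abbrev l2T (T : Type*) := lp (fun _ : T => ℂ) 2

/-- Green function on ℓ² of an arbitrary index set. -/
def GrnT {T : Type*} (z : ℂ) (A : l2T T →L[ℂ] l2T T) (x y : T) : ℂ :=
  Ring.inverse (A - z • 1) (lp.single 2 y 1) x

/-! The Krein formula writes the perturbed Green function as a fractional linear function of the
couplings. With one site, `|G| |v - t| ≤ 1` for some real `t`. With two sites, let
`p, q, r, w = G₀(x, x), G₀(x, y), G₀(y, x), G₀(y, y)` and `Δ = p w - q r`; then `G(x, y) = q / N`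
with `N = (1 + u p) + v (w + u Δ) = (1 + v w) + u (p + v Δ)`. Hence `|G|` is at most `3` divided by
the distance of `v` to a curve `τ₁ u` when `|w + u Δ| ≥ |q| / 3`, and symmetrically for
`|p + v Δ| ≥ |q| / 3`. When both slopes are small, definiteness of the imaginary part of the `2 × 2`
matrix `G₀`, which passes to its inverse, forces `|r| ≥ |q| / 3`. Then
`Δ N = (p + v Δ) (w + u Δ) - q r` has modulus at least `2 |q|² / 9`, so `|Δ| ≥ 2 |G| |q| / 9`, and
`|w + u Δ| ≤ |q| / 3` puts `u` within `3 / |G|` of the constant `Re (-w / Δ)`. So `{|G| > λ}` is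
covered by strips of width `O(1 / λ)` around two curves, its measure is `O(λ ^ (-α))` by regularity,
and the layer cake formula bounds the moments of order `s < α`. -/

section FractionalLinear

open scoped ComplexConjugate

theorem norm_mul_abs_sub_re_le {X β γ c : ℂ} {v m : ℝ} (hm : 0 ≤ m) (hβγ : β ≠ 0 ∨ γ ≠ 0)
    (hX : X * (β + v * γ) = c) (hc : ‖c‖ ≤ m * ‖γ‖) : ‖X‖ * |v - (-(β / γ)).re| ≤ m := by
  rcases eq_or_ne γ 0 with rfl | hγ
  · have hβ : β ≠ 0 := hβγ.resolve_right (not_not.mpr rfl)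
    have hc0 : c = 0 := by simpa using hc
    have hX0 : X = 0 := by simpa [hc0, hβ] using hX
    simpa [hX0] using hm
  · have hre : |v - (-(β / γ)).re| ≤ ‖(v : ℂ) + β / γ‖ := by
      simpa using Complex.abs_re_le_norm ((v : ℂ) + β / γ)
    have hXc : X * (v + β / γ) = c / γ := by
      rw [← hX]
      field_simp
      ring
    calc ‖X‖ * |v - (-(β / γ)).re| ≤ ‖X‖ * ‖(v : ℂ) + β / γ‖ := by gcongr
      _ = ‖c‖ / ‖γ‖ := by rw [← norm_mul, hXc, norm_div]
      _ ≤ m := (div_le_iff₀ (norm_pos_iff.mpr hγ)).mpr hc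

theorem one_sub_two_mul_norm_le_of_abs_im_le {a b c d : ℂ} {κ : ℝ}
    (h : ‖b - conj c‖ ^ 2 ≤ 4 * (a.im * d.im)) (ha : |a.im| ≤ κ * ‖b‖) (hd : |d.im| ≤ κ * ‖b‖) :
    (1 - 2 * κ) * ‖b‖ ≤ ‖c‖ := by
  have hκb : 0 ≤ κ * ‖b‖ := (abs_nonneg _).trans ha
  have had : a.im * d.im ≤ (κ * ‖b‖) ^ 2 := by
    calc a.im * d.im ≤ |a.im| * |d.im| := (le_abs_self _).trans_eq (abs_mul _ _)
      _ ≤ (κ * ‖b‖) ^ 2 := by rw [sq]; gcongr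
  have hbc : ‖b - conj c‖ ≤ 2 * (κ * ‖b‖) := le_of_sq_le_sq (by linarith) (by positivity)
  have := norm_sub_norm_le b (conj c)
  rw [Complex.norm_conj] at this
  linarith

/-- The determinant of the imaginary part of the inverse of a `2 × 2` matrix, with denominators
cleared so that it also covers singular matrices. -/
theorem four_mul_im_mul_conj_det_sub_norm_sq (p q r w : ℂ) :
    4 * ((p * conj (p * w - q * r)).im * (w * conj (p * w - q * r)).im)
        - ‖q * conj (p * w - q * r) - conj (r * conj (p * w - q * r))‖ ^ 2
      = ‖p * w - q * r‖ ^ 2 * (4 * (p.im * w.im) - ‖q - conj r‖ ^ 2) := by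
  simp only [Complex.sq_norm, Complex.normSq_apply, Complex.sub_re, Complex.sub_im, Complex.mul_re,
    Complex.mul_im, Complex.conj_re, Complex.conj_im]
  ring

theorem abs_im_mul_conj_le_of_norm_add_ofReal_mul_le {a d : ℂ} {t κ : ℝ} (h : ‖a + t * d‖ ≤ κ) :
    |(a * conj d).im| ≤ κ * ‖d‖ := by
  have him : (a * conj d).im = ((a + t * d) * conj d).im := by
    simp only [Complex.mul_im, Complex.mul_re, Complex.add_re, Complex.add_im, Complex.ofReal_re,
      Complex.ofReal_im, Complex.conj_re, Complex.conj_im]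
    ring
  calc |(a * conj d).im| ≤ ‖a + t * d‖ * ‖d‖ := by
        rw [him, ← Complex.norm_conj d, ← norm_mul]
        exact Complex.abs_im_le_norm _
    _ ≤ κ * ‖d‖ := by gcongr

variable {p q r w : ℂ} {u v : ℝ}

theorem one_sub_two_mul_norm_le_of_norm_add_det_le {κ : ℝ}
    (h : ‖q - conj r‖ ^ 2 ≤ 4 * (p.im * w.im))
    (hU : ‖w + u * (p * w - q * r)‖ ≤ κ * ‖q‖) (hV : ‖p + v * (p * w - q * r)‖ ≤ κ * ‖q‖) :
    (1 - 2 * κ) * ‖q‖ ≤ ‖r‖ := by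
  have hdet := four_mul_im_mul_conj_det_sub_norm_sq p q r w
  generalize p * w - q * r = Δ at *
  rcases eq_or_ne Δ 0 with rfl | hΔ
  · simp only [mul_zero, add_zero] at hU hV
    exact one_sub_two_mul_norm_le_of_abs_im_le h ((Complex.abs_im_le_norm p).trans hV)
      ((Complex.abs_im_le_norm w).trans hU)
  · have hΔ0 : 0 < ‖conj Δ‖ := by simpa using hΔ
    have hinv : ‖q * conj Δ - conj (r * conj Δ)‖ ^ 2
        ≤ 4 * ((p * conj Δ).im * (w * conj Δ).im) := by
      have := mul_nonneg (sq_nonneg ‖Δ‖) (sub_nonneg.mpr h)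
      linarith
    have hq : κ * ‖q * conj Δ‖ = κ * ‖q‖ * ‖Δ‖ := by rw [norm_mul, Complex.norm_conj, mul_assoc]
    have hqr := one_sub_two_mul_norm_le_of_abs_im_le (κ := κ) hinv
      (hq ▸ abs_im_mul_conj_le_of_norm_add_ofReal_mul_le hV)
      (hq ▸ abs_im_mul_conj_le_of_norm_add_ofReal_mul_le hU)
    rw [norm_mul, norm_mul, ← mul_assoc] at hqr
    exact le_of_mul_le_mul_right hqr hΔ0

theorem two_ninths_mul_norm_mul_norm_le_norm_det {X : ℂ} (hq : q ≠ 0)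
    (h : ‖q - conj r‖ ^ 2 ≤ 4 * (p.im * w.im))
    (hU : ‖w + u * (p * w - q * r)‖ ≤ 1 / 3 * ‖q‖) (hV : ‖p + v * (p * w - q * r)‖ ≤ 1 / 3 * ‖q‖)
    (hX : X * ((1 + u * p) * (1 + v * w) - u * v * (q * r)) = q) :
    2 / 9 * (‖X‖ * ‖q‖) ≤ ‖p * w - q * r‖ := by
  have hq0 : 0 < ‖q‖ := norm_pos_iff.mpr hq
  have hqr : 1 / 3 * ‖q‖ ≤ ‖r‖ := by
    linarith [one_sub_two_mul_norm_le_of_norm_add_det_le h hU hV]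
  have hXΔ : (p * w - q * r) * q
      = X * ((p + v * (p * w - q * r)) * (w + u * (p * w - q * r)) - q * r) := by
    linear_combination -(p * w - q * r) * hX
  have hlower : 2 / 9 * ‖q‖ ^ 2
      ≤ ‖(p + v * (p * w - q * r)) * (w + u * (p * w - q * r)) - q * r‖ := by
    have hUV : ‖(p + v * (p * w - q * r)) * (w + u * (p * w - q * r))‖
        ≤ 1 / 3 * ‖q‖ * (1 / 3 * ‖q‖) := norm_mul_le_of_le hV hU
    have hqr_lower : ‖q‖ * (1 / 3 * ‖q‖) ≤ ‖q * r‖ := by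
      rw [norm_mul]
      gcongr
    rw [norm_sub_rev]
    linarith [norm_sub_norm_le (q * r) ((p + v * (p * w - q * r)) * (w + u * (p * w - q * r)))]
  refine le_of_mul_le_mul_right ?_ hq0
  calc 2 / 9 * (‖X‖ * ‖q‖) * ‖q‖ = ‖X‖ * (2 / 9 * ‖q‖ ^ 2) := by ring
    _ ≤ ‖X‖ * ‖(p + v * (p * w - q * r)) * (w + u * (p * w - q * r)) - q * r‖ := by gcongr
    _ = ‖p * w - q * r‖ * ‖q‖ := by rw [← norm_mul, ← hXΔ, norm_mul]

theorem exists_norm_mul_abs_sub_le_three (h : ‖q - conj r‖ ^ 2 ≤ 4 * (p.im * w.im)) :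
    ∃ τ₁ τ₂ : ℝ → ℝ, Measurable τ₁ ∧ Measurable τ₂ ∧ ∀ (u v : ℝ) (X : ℂ),
      X * ((1 + u * p) * (1 + v * w) - u * v * (q * r)) = q →
        ‖X‖ * |v - τ₁ u| ≤ 3 ∨ ‖X‖ * |u - τ₂ v| ≤ 3 := by
  rcases eq_or_ne q 0 with rfl | hq
  · refine ⟨fun _ ↦ (-(1 / w)).re, fun _ ↦ (-(1 / p)).re, measurable_const, measurable_const,
      fun u v X hX ↦ ?_⟩
    have hzero : X * (1 + v * w) = 0 ∨ X * (1 + u * p) = 0 := by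
      simp only [zero_mul, mul_zero, sub_zero, mul_eq_zero] at hX ⊢
      tauto
    exact hzero.imp
      (fun h ↦ norm_mul_abs_sub_re_le zero_le_three (.inl one_ne_zero) h (by simp))
      (fun h ↦ norm_mul_abs_sub_re_le zero_le_three (.inl one_ne_zero) h (by simp))
  · have hq0 : 0 < ‖q‖ := norm_pos_iff.mpr hq
    refine ⟨fun u ↦ (-((1 + u * p) / (w + u * (p * w - q * r)))).re,
      fun v ↦ if ‖q‖ ≤ 3 * ‖p + v * (p * w - q * r)‖ then
        (-((1 + v * w) / (p + v * (p * w - q * r)))).re else (-(w / (p * w - q * r))).re,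
      by fun_prop,
      Measurable.ite (measurableSet_le (by fun_prop) (by fun_prop)) (by fun_prop) (by fun_prop),
      fun u v X hX ↦ ?_⟩
    by_cases hU : ‖q‖ ≤ 3 * ‖w + u * (p * w - q * r)‖
    · have hγ : w + u * (p * w - q * r) ≠ 0 := norm_pos_iff.mp (by linarith)
      exact .inl (norm_mul_abs_sub_re_le zero_le_three (.inr hγ) (by linear_combination hX) hU)
    right
    beta_reduce
    split_ifs with hV
    · have hγ : p + v * (p * w - q * r) ≠ 0 := norm_pos_iff.mp (by linarith)
      exact norm_mul_abs_sub_re_le zero_le_three (.inr hγ) (by linear_combination hX) hV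
    · have hdet := two_ninths_mul_norm_mul_norm_le_norm_det hq h (by linarith) (by linarith) hX
      have hX0 : X ≠ 0 := left_ne_zero_of_mul (hX ▸ hq)
      have hΔ : p * w - q * r ≠ 0 :=
        norm_pos_iff.mp (lt_of_lt_of_le (by positivity) hdet)
      refine norm_mul_abs_sub_re_le zero_le_three (.inr hΔ) rfl ?_
      rw [norm_mul]
      nlinarith [norm_nonneg X]

end FractionalLinear

section Resolvent

variable {𝓐 : Type*} [CStarAlgebra 𝓐] {a b : 𝓐} {z : ℂ}

theorem isUnit_sub_smul_one_of_isSelfAdjoint (ha : IsSelfAdjoint a) (hz : z.im ≠ 0) :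
    IsUnit (a - z • 1) := by
  have hnot_mem : z ∉ spectrum ℂ a := fun h ↦ hz (ha.im_eq_zero_of_mem_spectrum h)
  rw [spectrum.notMem_iff, Algebra.algebraMap_eq_smul_one] at hnot_mem
  rw [← neg_sub]
  exact hnot_mem.neg

theorem inverse_add_sub_smul_one (ha : IsSelfAdjoint a) (hb : IsSelfAdjoint b) (hz : z.im ≠ 0) :
    Ring.inverse (a + b - z • 1)
      = Ring.inverse (a - z • 1) - Ring.inverse (a - z • 1) * b * Ring.inverse (a + b - z • 1) := by
  have h := Ring.inverse_sub_inverse (iff_of_true (isUnit_sub_smul_one_of_isSelfAdjoint ha hz)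
    (isUnit_sub_smul_one_of_isSelfAdjoint (ha.add hb) hz))
  rw [show a + b - z • 1 - (a - z • 1) = b by abel] at h
  rw [← h, sub_sub_cancel]

theorem continuous_inverse_sub_smul_one {X : Type*} [TopologicalSpace X] {f : X → 𝓐}
    (hf : Continuous f) (hsa : ∀ x, IsSelfAdjoint (f x)) (hz : z.im ≠ 0) :
    Continuous fun x ↦ Ring.inverse (f x - z • 1) :=
  continuous_iff_continuousAt.mpr fun x ↦
    ContinuousAt.comp (f := fun x ↦ f x - z • 1)
      (NormedRing.inverse_continuousAt (isUnit_sub_smul_one_of_isSelfAdjoint (hsa x) hz).unit)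
      (hf.sub continuous_const).continuousAt

end Resolvent

section GreenFunction

open scoped ComplexConjugate InnerProductSpace
open InnerProductSpace (rankOne)

variable {H : Type*} [NormedAddCommGroup H] [InnerProductSpace ℂ H]

/-- The Green function `⟨e, (A - z)⁻¹ f⟩` of an operator between two vectors of a Hilbert space;
it extends `GrnT`, which is the case of two basis vectors of `ℓ²(T)`. As there, the inverse of a
non-invertible operator is `0`. -/
def greenFunction (z : ℂ) (A : H →L[ℂ] H) (e f : H) : ℂ :=
  ⟪e, Ring.inverse (A - z • 1) f⟫_ℂ

variable [CompleteSpace H] {A : H →L[ℂ] H} {z : ℂ}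

theorem isSelfAdjoint_ofReal_smul_rankOne_self (v : ℝ) (e : H) :
    IsSelfAdjoint ((v : ℂ) • rankOne ℂ e e) :=
  IsSelfAdjoint.smul (Complex.conj_ofReal v)
    (ContinuousLinearMap.isSelfAdjoint_iff_isSymmetric.mpr
      (InnerProductSpace.isSymmetric_rankOne_self e))

theorem greenFunction_sub_conj (hA : IsSelfAdjoint A) (hz : z.im ≠ 0) (e f : H) :
    greenFunction z A e f - conj (greenFunction z A f e)
      = (z - conj z) * ⟪Ring.inverse (A - z • 1) e, Ring.inverse (A - z • 1) f⟫_ℂ := by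
  have hres (g : H) : A (Ring.inverse (A - z • 1) g) - z • Ring.inverse (A - z • 1) g = g := by
    simpa using DFunLike.congr_fun
      (Ring.mul_inverse_cancel _ (isUnit_sub_smul_one_of_isSelfAdjoint hA hz)) g
  rw [greenFunction, greenFunction, inner_conj_symm]
  set ψ := Ring.inverse (A - z • 1) e
  set φ := Ring.inverse (A - z • 1) f
  have hsymm : ⟪A ψ, φ⟫_ℂ = ⟪ψ, A φ⟫_ℂ :=
    ContinuousLinearMap.isSelfAdjoint_iff_isSymmetric.mp hA ψ φ
  calc ⟪e, φ⟫_ℂ - ⟪ψ, f⟫_ℂ = ⟪A ψ - z • ψ, φ⟫_ℂ - ⟪ψ, A φ - z • φ⟫_ℂ := by rw [hres, hres]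
    _ = (z - conj z) * ⟪ψ, φ⟫_ℂ := by
      rw [inner_sub_left, inner_sub_right, inner_smul_left, inner_smul_right, hsymm]
      ring

theorem norm_sq_greenFunction_sub_conj_le (hA : IsSelfAdjoint A) (hz : z.im ≠ 0) (e f : H) :
    ‖greenFunction z A e f - conj (greenFunction z A f e)‖ ^ 2
      ≤ 4 * ((greenFunction z A e e).im * (greenFunction z A f f).im) := by
  have him (g : H) : (greenFunction z A g g).im = z.im * ‖Ring.inverse (A - z • 1) g‖ ^ 2 := by
    have h := greenFunction_sub_conj hA hz g g
    rw [inner_self_eq_norm_sq_to_K, Complex.sub_conj, Complex.sub_conj] at h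
    have himg : 2 * (greenFunction z A g g).im = 2 * z.im * ‖Ring.inverse (A - z • 1) g‖ ^ 2 :=
      Complex.ofReal_injective (mul_right_cancel₀ Complex.I_ne_zero (by
        push_cast at h ⊢
        linear_combination h))
    linarith
  have hzz : ‖z - conj z‖ ^ 2 = 4 * z.im ^ 2 := by
    rw [Complex.sub_conj, norm_mul, Complex.norm_I, mul_one, Complex.norm_real, Real.norm_eq_abs,
      sq_abs]
    ring
  rw [him, him, greenFunction_sub_conj hA hz, norm_mul, mul_pow, hzz]
  calc 4 * z.im ^ 2 * ‖⟪Ring.inverse (A - z • 1) e, Ring.inverse (A - z • 1) f⟫_ℂ‖ ^ 2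
      ≤ 4 * z.im ^ 2 * (‖Ring.inverse (A - z • 1) e‖ * ‖Ring.inverse (A - z • 1) f‖) ^ 2 := by
        gcongr
        exact norm_inner_le_norm _ _
    _ = _ := by ring

theorem continuous_greenFunction {X : Type*} [TopologicalSpace X] {B : X → H →L[ℂ] H}
    (hB : Continuous B) (hsa : ∀ x, IsSelfAdjoint (B x)) (hz : z.im ≠ 0) (e f : H) :
    Continuous fun x ↦ greenFunction z (B x) e f :=
  continuous_const.inner ((continuous_inverse_sub_smul_one hB hsa hz).clm_apply continuous_const)

theorem greenFunction_add {B : H →L[ℂ] H} (hA : IsSelfAdjoint A) (hB : IsSelfAdjoint B)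
    (hz : z.im ≠ 0) (e f : H) :
    greenFunction z (A + B) e f
      = greenFunction z A e f - greenFunction z A e (B (Ring.inverse (A + B - z • 1) f)) := by
  simp only [greenFunction]
  conv_lhs => rw [inverse_add_sub_smul_one hA hB hz]
  rw [sub_apply, inner_sub_right]
  rfl

theorem greenFunction_add_smul_rankOne_mul (hA : IsSelfAdjoint A) (hz : z.im ≠ 0) (v : ℝ) (e : H) :
    greenFunction z (A + (v : ℂ) • rankOne ℂ e e) e e * (1 + v * greenFunction z A e e)
      = greenFunction z A e e := by
  have hkrein := greenFunction_add hA (isSelfAdjoint_ofReal_smul_rankOne_self v e) hz e e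
  simp only [greenFunction, smul_apply, InnerProductSpace.rankOne_apply, map_smul,
    inner_smul_right] at hkrein ⊢
  linear_combination hkrein

theorem greenFunction_add_smul_rankOne_add_smul_rankOne_mul (hA : IsSelfAdjoint A) (hz : z.im ≠ 0)
    (u v : ℝ) (e f : H) :
    greenFunction z (A + (u : ℂ) • rankOne ℂ e e + (v : ℂ) • rankOne ℂ f f) e f
        * ((1 + u * greenFunction z A e e) * (1 + v * greenFunction z A f f)
          - u * v * (greenFunction z A e f * greenFunction z A f e))
      = greenFunction z A e f := by
  have hV := (isSelfAdjoint_ofReal_smul_rankOne_self u e).add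
    (isSelfAdjoint_ofReal_smul_rankOne_self v f)
  have hkrein (g : H) := greenFunction_add hA hV hz g f
  simp only [greenFunction, add_apply, smul_apply, InnerProductSpace.rankOne_apply, map_add,
    map_smul, inner_add_right, inner_smul_right, ← add_assoc] at hkrein ⊢
  linear_combination (1 + v * ⟪f, Ring.inverse (A - z • 1) f⟫_ℂ) * hkrein e
    - v * ⟪e, Ring.inverse (A - z • 1) f⟫_ℂ * hkrein f

end GreenFunction

section WeakType

theorem lintegral_Ioc_zero_rpow {a c : ℝ} (ha : -1 < a) (hc : 0 ≤ c) :
    ∫⁻ t in Set.Ioc 0 c, ENNReal.ofReal (t ^ a) = ENNReal.ofReal (c ^ (a + 1) / (a + 1)) := by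
  have hint : IntegrableOn (fun t : ℝ ↦ t ^ a) (Set.Ioc 0 c) :=
    (intervalIntegrable_iff_integrableOn_Ioc_of_le hc).mp
      (intervalIntegral.intervalIntegrable_rpow' ha)
  rw [← ofReal_integral_eq_lintegral_ofReal hint, ← intervalIntegral.integral_of_le hc,
    integral_rpow (.inl ha), Real.zero_rpow (by linarith), sub_zero]
  filter_upwards [ae_restrict_mem measurableSet_Ioc] with t ht using Real.rpow_nonneg ht.1.le a

theorem lintegral_Ioi_rpow_of_lt {a c : ℝ} (ha : a < -1) (hc : 0 < c) :
    ∫⁻ t in Set.Ioi c, ENNReal.ofReal (t ^ a) = ENNReal.ofReal (-c ^ (a + 1) / (a + 1)) := by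
  rw [← ofReal_integral_eq_lintegral_ofReal (integrableOn_Ioi_rpow_of_lt ha hc),
    integral_Ioi_rpow_of_lt ha hc]
  filter_upwards [ae_restrict_mem measurableSet_Ioi] with t ht using
    Real.rpow_nonneg (hc.trans ht).le a

theorem lintegral_enorm_rpow_le_of_measure_lt_norm_le {X E : Type*} [MeasurableSpace X]
    [SeminormedAddCommGroup E] {μ : Measure X} {f : X → E} (hf : AEStronglyMeasurable f μ)
    {s α : ℝ} (hs : 0 < s) (hsα : s < α) {K : ℝ≥0∞}
    (hK : ∀ t : ℝ, 0 < t → μ {x | t < ‖f x‖} ≤ K * ENNReal.ofReal (t ^ (-α))) :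
    ∫⁻ x, ‖f x‖ₑ ^ s ∂μ ≤ μ Set.univ + K * ENNReal.ofReal (s / (α - s)) := by
  have hsmall : ∫⁻ t in Set.Ioc (0 : ℝ) 1, μ {x | t < ‖f x‖} * ENNReal.ofReal (t ^ (s - 1))
      ≤ μ Set.univ * ENNReal.ofReal (1 / s) := by
    calc _ ≤ ∫⁻ t in Set.Ioc (0 : ℝ) 1, μ Set.univ * ENNReal.ofReal (t ^ (s - 1)) := by
          gcongr
          exact Set.subset_univ _
      _ = μ Set.univ * ENNReal.ofReal (1 / s) := by
          rw [lintegral_const_mul _ (by fun_prop),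
            lintegral_Ioc_zero_rpow (by linarith) zero_le_one, sub_add_cancel, Real.one_rpow]
  have hlarge : ∫⁻ t in Set.Ioi (1 : ℝ), μ {x | t < ‖f x‖} * ENNReal.ofReal (t ^ (s - 1))
      ≤ K * ENNReal.ofReal (1 / (α - s)) := by
    calc _ ≤ ∫⁻ t in Set.Ioi (1 : ℝ), K * ENNReal.ofReal (t ^ (s - 1 - α)) := by
          refine setLIntegral_mono (by fun_prop) fun t (ht : 1 < t) ↦ ?_
          have ht0 : 0 < t := one_pos.trans ht
          calc _ ≤ K * ENNReal.ofReal (t ^ (-α)) * ENNReal.ofReal (t ^ (s - 1)) := by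
                gcongr
                exact hK t ht0
            _ = K * ENNReal.ofReal (t ^ (s - 1 - α)) := by
                rw [mul_assoc, ← ENNReal.ofReal_mul (by positivity), ← Real.rpow_add ht0]
                ring_nf
      _ = K * ENNReal.ofReal (1 / (α - s)) := by
          rw [lintegral_const_mul _ (by fun_prop), lintegral_Ioi_rpow_of_lt (by linarith) one_pos,
            Real.one_rpow, show s - 1 - α + 1 = -(α - s) by ring, neg_div_neg_eq]
  calc ∫⁻ x, ‖f x‖ₑ ^ s ∂μ
      = ∫⁻ x, ENNReal.ofReal (‖f x‖ ^ s) ∂μ := by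
        simp_rw [← ENNReal.ofReal_rpow_of_nonneg (norm_nonneg _) hs.le, ofReal_norm]
    _ = ENNReal.ofReal s * ∫⁻ t in Set.Ioi 0, μ {x | t < ‖f x‖} * ENNReal.ofReal (t ^ (s - 1)) :=
        lintegral_rpow_eq_lintegral_meas_lt_mul μ (.of_forall fun _ ↦ norm_nonneg _)
          hf.norm.aemeasurable hs
    _ ≤ ENNReal.ofReal s *
          (μ Set.univ * ENNReal.ofReal (1 / s) + K * ENNReal.ofReal (1 / (α - s))) := by
        rw [← Set.Ioc_union_Ioi_eq_Ioi zero_le_one]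
        gcongr
        exact (lintegral_union_le _ _ _).trans (add_le_add hsmall hlarge)
    _ = μ Set.univ + K * ENNReal.ofReal (s / (α - s)) := by
        rw [mul_add, mul_left_comm, mul_left_comm (ENNReal.ofReal s), ← ENNReal.ofReal_mul hs.le,
          ← ENNReal.ofReal_mul hs.le, mul_one_div_cancel hs.ne', ENNReal.ofReal_one, mul_one,
          mul_one_div]

end WeakType

section Strips

theorem mem_Icc_of_mul_abs_sub_le {g x t m r : ℝ} (hr : 0 < r) (hrg : r < g)
    (h : g * |x - t| ≤ m) : x ∈ Set.Icc (t - m / r) (t + m / r) := by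
  have hx : |x - t| ≤ m / r := by
    rw [le_div_iff₀ hr, mul_comm]
    exact (mul_le_mul_of_nonneg_right hrg.le (abs_nonneg _)).trans h
  rwa [← Real.closedBall_eq_Icc, Metric.mem_closedBall, Real.dist_eq]

variable {X Y : Type*} [MeasurableSpace X] [MeasurableSpace Y]

theorem measurableSet_setOf_mem_Icc_sub_add {f τ : X → ℝ} (hf : Measurable f) (hτ : Measurable τ)
    (δ : ℝ) : MeasurableSet {x | f x ∈ Set.Icc (τ x - δ) (τ x + δ)} :=
  (measurableSet_le (hτ.sub_const δ) hf).inter (measurableSet_le hf (hτ.add_const δ))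

variable {δ : ℝ} {b : ℝ≥0∞}

theorem prod_measure_snd_mem_Icc_le {μ : Measure X} {ν : Measure ℝ} [SFinite ν] {τ : X → ℝ}
    (hτ : Measurable τ) (hν : ∀ t, ν (Set.Icc (t - δ) (t + δ)) ≤ b) :
    μ.prod ν {p | p.2 ∈ Set.Icc (τ p.1 - δ) (τ p.1 + δ)} ≤ b * μ Set.univ := by
  have hmeas : MeasurableSet {p : X × ℝ | p.2 ∈ Set.Icc (τ p.1 - δ) (τ p.1 + δ)} :=
    measurableSet_setOf_mem_Icc_sub_add measurable_snd (hτ.comp measurable_fst) δ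
  rw [Measure.prod_apply hmeas, ← lintegral_const]
  exact lintegral_mono fun x ↦ hν (τ x)

theorem prod_measure_fst_mem_Icc_le {μ : Measure ℝ} {ν : Measure Y} [SFinite μ] [SFinite ν]
    {τ : Y → ℝ} (hτ : Measurable τ) (hμ : ∀ t, μ (Set.Icc (t - δ) (t + δ)) ≤ b) :
    μ.prod ν {p | p.1 ∈ Set.Icc (τ p.2 - δ) (τ p.2 + δ)} ≤ b * ν Set.univ := by
  have hmeas : MeasurableSet {p : ℝ × Y | p.1 ∈ Set.Icc (τ p.2 - δ) (τ p.2 + δ)} :=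
    measurableSet_setOf_mem_Icc_sub_add measurable_fst (hτ.comp measurable_snd) δ
  rw [Measure.prod_apply_symm hmeas, ← lintegral_const]
  exact lintegral_mono fun y ↦ hμ (τ y)

end Strips

section HolderRegular

/-- `μ` is `α`-regular with constant `C₀`, that is, uniformly `α`-Hölder continuous. The constant
is a parameter so that the bounds can be stated in terms of it. -/
def IsHolderRegular (μ : Measure ℝ) (α C₀ : ℝ) : Prop :=
  ∀ t ε : ℝ, 0 < ε → μ (Set.Icc (t - ε) (t + ε)) ≤ ENNReal.ofReal (C₀ * ε ^ α)

namespace IsHolderRegular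

variable {μ : Measure ℝ} {α C₀ m r : ℝ}

theorem measure_Icc_sub_div_add_div_le (hreg : IsHolderRegular μ α C₀) (hm : 0 < m) (hr : 0 < r)
    (t : ℝ) :
    μ (Set.Icc (t - m / r) (t + m / r))
      ≤ ENNReal.ofReal (C₀ * m ^ α) * ENNReal.ofReal (r ^ (-α)) := by
  rw [← ENNReal.ofReal_mul' (by positivity), mul_assoc, Real.rpow_neg hr.le, ← div_eq_mul_inv,
    ← Real.div_rpow hm.le hr.le]
  exact hreg t _ (div_pos hm hr)

theorem measure_lt_le_of_mul_abs_sub_le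
    (hreg : IsHolderRegular μ α C₀) (hm : 0 < m) (hr : 0 < r) {g : ℝ → ℝ} {t : ℝ}
    (hg : ∀ v, g v * |v - t| ≤ m) :
    μ {v | r < g v} ≤ ENNReal.ofReal (C₀ * m ^ α) * ENNReal.ofReal (r ^ (-α)) :=
  (measure_mono fun v hv ↦ mem_Icc_of_mul_abs_sub_le hr hv (hg v)).trans
    (hreg.measure_Icc_sub_div_add_div_le hm hr t)

theorem prod_measure_lt_le_of_mul_abs_sub_le [SFinite μ]
    (hreg : IsHolderRegular μ α C₀) (hm : 0 < m) (hr : 0 < r) {g : ℝ × ℝ → ℝ} {τ₁ τ₂ : ℝ → ℝ}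
    (hτ₁ : Measurable τ₁) (hτ₂ : Measurable τ₂)
    (hg : ∀ p, g p * |p.2 - τ₁ p.1| ≤ m ∨ g p * |p.1 - τ₂ p.2| ≤ m) :
    μ.prod μ {p | r < g p}
      ≤ 2 * ENNReal.ofReal (C₀ * m ^ α) * μ Set.univ * ENNReal.ofReal (r ^ (-α)) := by
  have hstrip := hreg.measure_Icc_sub_div_add_div_le hm hr
  calc μ.prod μ {p | r < g p}
      ≤ μ.prod μ ({p | p.2 ∈ Set.Icc (τ₁ p.1 - m / r) (τ₁ p.1 + m / r)}
          ∪ {p | p.1 ∈ Set.Icc (τ₂ p.2 - m / r) (τ₂ p.2 + m / r)}) :=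
        measure_mono fun p hp ↦ (hg p).imp (mem_Icc_of_mul_abs_sub_le hr hp)
          (mem_Icc_of_mul_abs_sub_le hr hp)
    _ ≤ _ := (measure_union_le _ _).trans (add_le_add (prod_measure_snd_mem_Icc_le hτ₁ hstrip)
        (prod_measure_fst_mem_Icc_le hτ₂ hstrip))
    _ = _ := by ring

end IsHolderRegular

end HolderRegular

section Wegner

open InnerProductSpace (rankOne)

variable {μ : Measure ℝ} {α C₀ s : ℝ} {H : Type*} [NormedAddCommGroup H]
  [InnerProductSpace ℂ H] [CompleteSpace H] {A : H →L[ℂ] H} {z : ℂ}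

theorem lintegral_enorm_greenFunction_add_smul_rankOne_rpow_le
    (hreg : IsHolderRegular μ α C₀) (hs : 0 < s) (hsα : s < α) (hA : IsSelfAdjoint A)
    (hz : z.im ≠ 0) (e : H) :
    ∫⁻ v : ℝ, ‖greenFunction z (A + (v : ℂ) • rankOne ℂ e e) e e‖ₑ ^ s ∂μ
      ≤ μ Set.univ + ENNReal.ofReal C₀ * ENNReal.ofReal (s / (α - s)) := by
  have hcont : Continuous fun v : ℝ ↦ greenFunction z (A + (v : ℂ) • rankOne ℂ e e) e e :=
    continuous_greenFunction (by fun_prop)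
      (fun v ↦ hA.add (isSelfAdjoint_ofReal_smul_rankOne_self v e)) hz e e
  refine lintegral_enorm_rpow_le_of_measure_lt_norm_le hcont.aestronglyMeasurable hs hsα
    fun r hr ↦ ?_
  have hwidth (v : ℝ) := norm_mul_abs_sub_re_le zero_le_one (.inl one_ne_zero)
    (greenFunction_add_smul_rankOne_mul hA hz v e) (one_mul _).ge
  simpa only [Real.one_rpow, mul_one] using
    hreg.measure_lt_le_of_mul_abs_sub_le one_pos hr hwidth

theorem lintegral_lintegral_enorm_greenFunction_rpow_le [SFinite μ]
    (hreg : IsHolderRegular μ α C₀) (hs : 0 < s) (hsα : s < α) (hA : IsSelfAdjoint A)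
    (hz : z.im ≠ 0) (e f : H) :
    ∫⁻ u : ℝ, ∫⁻ v : ℝ, ‖greenFunction z
        (A + (u : ℂ) • rankOne ℂ e e + (v : ℂ) • rankOne ℂ f f) e f‖ₑ ^ s ∂μ ∂μ
      ≤ μ.prod μ Set.univ
        + 2 * ENNReal.ofReal (C₀ * 3 ^ α) * μ Set.univ * ENNReal.ofReal (s / (α - s)) := by
  let B : ℝ × ℝ → H →L[ℂ] H := fun p ↦
    A + (p.1 : ℂ) • rankOne ℂ e e + (p.2 : ℂ) • rankOne ℂ f f
  have hB : Continuous B := by fun_prop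
  have hsa (p : ℝ × ℝ) : IsSelfAdjoint (B p) :=
    (hA.add (isSelfAdjoint_ofReal_smul_rankOne_self p.1 e)).add
      (isSelfAdjoint_ofReal_smul_rankOne_self p.2 f)
  have hcont := continuous_greenFunction hB hsa hz e f
  obtain ⟨τ₁, τ₂, hτ₁, hτ₂, hτ⟩ :=
    exists_norm_mul_abs_sub_le_three (norm_sq_greenFunction_sub_conj_le hA hz e f)
  calc ∫⁻ u, ∫⁻ v, ‖greenFunction z (B (u, v)) e f‖ₑ ^ s ∂μ ∂μ
      = ∫⁻ p, ‖greenFunction z (B p) e f‖ₑ ^ s ∂μ.prod μ :=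
        lintegral_lintegral (hcont.enorm.measurable.pow_const s).aemeasurable
    _ ≤ _ := lintegral_enorm_rpow_le_of_measure_lt_norm_le hcont.aestronglyMeasurable hs hsα
        fun r hr ↦ hreg.prod_measure_lt_le_of_mul_abs_sub_le three_pos hr hτ₁ hτ₂ fun p ↦
          hτ p.1 p.2 _ (greenFunction_add_smul_rankOne_add_smul_rankOne_mul hA hz p.1 p.2 e f)

theorem wegner_single_and_two_site_general (μ : Measure ℝ) [IsFiniteMeasure μ] (α C₀ : ℝ)
    (hreg : IsHolderRegular μ α C₀) (s : ℝ) (hs : 0 < s) (hsα : s < α) :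
    ∃ Cs : ℝ, 0 < Cs ∧ ∀ (H : Type*) [NormedAddCommGroup H] [InnerProductSpace ℂ H]
      [CompleteSpace H] (A : H →L[ℂ] H) (_ : IsSelfAdjoint A) (z : ℂ) (_ : z.im ≠ 0) (e f : H),
      ∫⁻ v : ℝ, ‖greenFunction z (A + (v : ℂ) • rankOne ℂ e e) e e‖ₑ ^ s ∂μ ≤ ENNReal.ofReal Cs ∧
      ∫⁻ u : ℝ, ∫⁻ v : ℝ, ‖greenFunction z
        (A + (u : ℂ) • rankOne ℂ e e + (v : ℂ) • rankOne ℂ f f) e f‖ₑ ^ s ∂μ ∂μ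
          ≤ ENNReal.ofReal Cs := by
  let D₁ := μ Set.univ + ENNReal.ofReal C₀ * ENNReal.ofReal (s / (α - s))
  let D₂ := μ.prod μ Set.univ
    + 2 * ENNReal.ofReal (C₀ * 3 ^ α) * μ Set.univ * ENNReal.ofReal (s / (α - s))
  have hD : D₁ + D₂ ≠ ∞ := by finiteness
  have hDs : D₁ + D₂ ≤ ENNReal.ofReal ((D₁ + D₂).toReal + 1) :=
    ENNReal.le_ofReal_iff_toReal_le hD (by positivity) |>.mpr (le_add_of_nonneg_right zero_le_one)
  refine ⟨(D₁ + D₂).toReal + 1, by positivity, fun H _ _ _ A hA z hz e f ↦ ⟨?_, ?_⟩⟩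
  · exact (lintegral_enorm_greenFunction_add_smul_rankOne_rpow_le hreg hs hsα hA hz e).trans
      (le_self_add.trans hDs)
  · exact (lintegral_lintegral_enorm_greenFunction_rpow_le hreg hs hsα hA hz e f).trans
      (le_add_self.trans hDs)

end Wegner

section SequenceSpace

open InnerProductSpace (rankOne)

variable {T : Type*}

theorem GrnT_eq_greenFunction (z : ℂ) (A : l2T T →L[ℂ] l2T T) (x y : T) :
    GrnT z A x y = greenFunction z A (lp.single 2 x 1) (lp.single 2 y 1) := by
  simp [GrnT, greenFunction, lp.inner_single_left]

theorem eq_rankOne_single {P : l2T T →L[ℂ] l2T T} {x : T}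
    (hP : ∀ ψ : l2T T, P ψ = lp.single 2 x (ψ x)) :
    P = rankOne ℂ (lp.single 2 x 1) (lp.single 2 x 1) := by
  ext1 ψ
  rw [hP, InnerProductSpace.rankOne_apply, lp.inner_single_left, ← lp.single_smul]
  simp

end SequenceSpace

/-- Lemma 2.2, Wegner-type single-site and two-site estimates. -/
theorem wegner_single_and_two_site
    (μ : Measure ℝ) [IsProbabilityMeasure μ]
    (α : ℝ) (hα : 0 < α)
    (C₀ : ℝ) (hC₀ : 0 ≤ C₀)
    (hreg : ∀ t ε : ℝ, 0 < ε → μ (Set.Icc (t - ε) (t + ε)) ≤ ENNReal.ofReal (C₀ * ε ^ α))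
    (s : ℝ) (hs0 : 0 < s) (hsα : s < α) :
    ∃ Cs : ℝ, 0 < Cs ∧
      ∀ (T : Type) (_ : Countable T)
        (A₀ : l2T T →L[ℂ] l2T T) (_ : IsSelfAdjoint A₀)
        (Px : T → (l2T T →L[ℂ] l2T T))
        (_ : ∀ (x : T) (ψ : l2T T), Px x ψ = lp.single 2 x (ψ x))
        (z : ℂ) (_ : z.im ≠ 0) (x y : T) (_ : x ≠ y),
        (∫⁻ v : ℝ, (‖GrnT z (A₀ + (v : ℂ) • Px x) x x‖₊ : ℝ≥0∞) ^ s ∂μ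
            ≤ ENNReal.ofReal Cs)
        ∧ (∫⁻ u : ℝ, ∫⁻ v : ℝ,
              (‖GrnT z (A₀ + (u : ℂ) • Px x + (v : ℂ) • Px y) x y‖₊ : ℝ≥0∞) ^ s ∂μ ∂μ
            ≤ ENNReal.ofReal Cs) := by
  obtain ⟨Cs, hCs, h⟩ := wegner_single_and_two_site_general μ α C₀ hreg s hs0 hsα
  refine ⟨Cs, hCs, fun T _ A₀ hA Px hPx z hz x y _ ↦ ?_⟩
  simpa only [eq_rankOne_single (hPx _), GrnT_eq_greenFunction, enorm_eq_nnnorm] using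
    h (l2T T) A₀ hA z hz (lp.single 2 x 1) (lp.single 2 y 1)

end
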